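/- arXiv:2604.21582 — 2 statements merged into one kernel-verified Lean document; each statement's English description precedes it below -/
import Mathlib

section
/- Let $z, z' \in \mathbb{H}$ and $t, t' > 0$, and let $A(t,r) = \frac{1}{2\sqrt{2}\pi}\frac{\mathbf{1}(t > r)}{\sqrt{\cosh t - \cosh r}}$ be the Abel kernel. Then $\int_{\mathbb{H}} A(t, d(z,x))\,A(t', d(z',x))\,dx \leq \frac{\mathbf{1}_{[0,t+t']}(d(z,z'))}{\sqrt{\sinh(\max(|t-t'|,\, d(z,z')))}}$. -/
open MeasureTheory UpperHalfPlane Real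
open scoped ENNReal

noncomputable instance : MeasurableSpace UpperHalfPlane := borel _
instance : BorelSpace UpperHalfPlane := ⟨rfl⟩

/-- The hyperbolic area measure on the upper half-plane model of `ℍ`. -/
noncomputable def hypVolume : Measure UpperHalfPlane :=
  ((volume : Measure ℂ).comap (UpperHalfPlane.coe)).withDensity
    fun z => ENNReal.ofReal (1 / z.im ^ 2)

/-- The Abel kernel `A(t,r)`, the integral kernel of the hyperbolic wave propagator. -/
noncomputable def abelKernel (t r : ℝ) : ℝ :=
  (1 / (2 * Real.sqrt 2 * Real.pi)) *
    (if r < t then 1 / Real.sqrt (Real.cosh t - Real.cosh r) else 0)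

/-! Write `R = √(-Δ - 1/4)`, so that `A(t, ·)` is the kernel of `sin (t R) / R`. The product-to-sum
formula `sin (t R) sin (t' R) / R² = ½ ∫_{|t-t'|}^{t+t'} sin (s R) / R ds` predicts the identity
`∫ A(t, d(z,x)) A(t', d(z',x)) dx = ½ ∫_{|t-t'|}^{t+t'} A(s, d(z,z')) ds`.

It can be verified directly. By symmetry let `t ≤ t'`, put `D = d(z,z')` and take geodesic polar
coordinates `(r, θ)` about `z`, where the area element is `sinh r dr dθ` and `d(z',x)` is given by
the law of cosines. For fixed `r < t`, replace `θ` by `s`, where `cos θ` is an affine function of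
`coth ((s + D) / 2)`; the integral over `θ` becomes a multiple of the integral over `s > D` of
`1 / √((cosh s - cosh D) (cosh r - cosh (s - t')))`. After exchanging the integrals, the
substitution `u = cosh r` turns the integral over `r` into an arcsine integral, equal to `π` when
`|s - t'| < t` and to `0` otherwise.

With `m = max |t-t'| D > 0`, the right-hand side is bounded by means of
`cosh s - cosh D ≥ cosh s - cosh m ≥ sinh m (e^(s-m) - 1)` and `∫_0^∞ dx / √(e^x - 1) = π`. -/

open scoped Topology

/-! ### Geodesic polar coordinates on the hyperbolic plane -/

/-- The spatial coordinate of `w` in the hyperboloid model of `ℍ` centred at `z`: the point of `ℂ`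
whose modulus is `sinh (dist z w)` and whose argument is the direction of `w` as seen from `z`. It
is defined for all `w : ℂ`, as a chart to differentiate, but is meaningful only for `0 < w.im`. -/
noncomputable def hyperboloidCoord (z : ℍ) (w : ℂ) : ℂ :=
  ⟨((w.re - z.re) ^ 2 + w.im ^ 2 - z.im ^ 2) / (2 * z.im * w.im), (z.re - w.re) / w.im⟩

lemma one_add_norm_sq_hyperboloidCoord (z w : ℍ) :
    1 + ‖hyperboloidCoord z w‖ ^ 2 = cosh (dist z w) ^ 2 := by
  simp only [← Complex.normSq_eq_norm_sq, Complex.normSq_apply, hyperboloidCoord,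
    UpperHalfPlane.cosh_dist', coe_re, coe_im]
  field_simp
  ring

lemma norm_hyperboloidCoord (z w : ℍ) : ‖hyperboloidCoord z w‖ = sinh (dist z w) := by
  rw [← sq_eq_sq₀ (norm_nonneg _) (sinh_nonneg_iff.2 dist_nonneg), sinh_sq,
    ← one_add_norm_sq_hyperboloidCoord]
  ring

lemma cosh_dist_eq_hyperboloidCoord (z z' w : ℍ) :
    cosh (dist z' w) = cosh (dist z w) * cosh (dist z z') -
      (hyperboloidCoord z z' * (starRingEnd ℂ) (hyperboloidCoord z w)).re := by
  simp only [hyperboloidCoord, UpperHalfPlane.cosh_dist', coe_re, coe_im, Complex.mul_re,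
    Complex.conj_re, Complex.conj_im]
  field_simp
  ring

lemma toLin_basisOneI_apply (a b c d : ℝ) (v : ℂ) :
    Matrix.toLin Complex.basisOneI Complex.basisOneI !![a, b; c, d] v =
      ⟨a * v.re + b * v.im, c * v.re + d * v.im⟩ := by
  apply Complex.ext <;> simp [Matrix.toLin_apply, Matrix.mulVec_eq_sum, mul_comm]

/-- The differential of `hyperboloidCoord z` at `w`, as its Jacobian matrix in the basis `1, I`. -/
noncomputable def hyperboloidCoordDeriv (z : ℍ) (w : ℂ) : ℂ →L[ℝ] ℂ :=
  (Matrix.toLin Complex.basisOneI Complex.basisOneI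
    !![(w.re - z.re) / (z.im * w.im),
      (w.im ^ 2 - (w.re - z.re) ^ 2 + z.im ^ 2) / (2 * z.im * w.im ^ 2);
      -1 / w.im, (w.re - z.re) / w.im ^ 2]).toContinuousLinearMap

lemma hasFDerivAt_hyperboloidCoord (z : ℍ) {w : ℂ} (hw : 0 < w.im) :
    HasFDerivAt (hyperboloidCoord z) (hyperboloidCoordDeriv z w) w := by
  have hre : HasFDerivAt Complex.re Complex.reCLM w := Complex.reCLM.hasFDerivAt
  have him : HasFDerivAt Complex.im Complex.imCLM w := Complex.imCLM.hasFDerivAt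
  have hnum := ((((hre.sub_const z.re).pow 2).add (him.pow 2)).sub_const (z.im ^ 2)).mul
    ((hasDerivAt_inv (x := 2 * z.im * w.im) (by positivity)).comp_hasFDerivAt w
      (him.const_mul (2 * z.im)))
  have hsnd := (hre.const_sub z.re).mul ((hasDerivAt_inv hw.ne').comp_hasFDerivAt w him)
  refine ((Complex.equivRealProdCLM.symm : ℝ × ℝ →L[ℝ] ℂ).hasFDerivAt.comp w
    (hnum.prodMk hsnd)).congr_fderiv ?_
  ext v
  rw [hyperboloidCoordDeriv, LinearMap.coe_toContinuousLinearMap', toLin_basisOneI_apply]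
  apply Complex.ext
  all_goals
    simp only [Pi.add_apply, _root_.neg_smul, smul_neg, Function.comp_apply, mul_inv_rev,
      Nat.add_one_sub_one, pow_one, nsmul_eq_mul, Nat.cast_ofNat, smul_add,
      ContinuousLinearMap.comp_apply, ContinuousLinearMap.prod_apply, add_apply, neg_apply,
      smul_apply, Complex.imCLM_apply, smul_eq_mul, Complex.reCLM_apply,
      ContinuousLinearEquiv.coe_coe, Complex.equivRealProdCLM_symm_apply_re,
      Complex.equivRealProdCLM_symm_apply_im]
    field_simp
    ring

lemma det_hyperboloidCoordDeriv (z w : ℍ) :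
    (hyperboloidCoordDeriv z w).det = cosh (dist z w) / w.im ^ 2 := by
  rw [hyperboloidCoordDeriv, LinearMap.det_toContinuousLinearMap, LinearMap.det_toLin,
    Matrix.det_fin_two_of, UpperHalfPlane.cosh_dist']
  simp only [coe_re, coe_im]
  field_simp
  ring

lemma cosh_dist_sub_re_hyperboloidCoord (z w : ℍ) :
    cosh (dist z w) - (hyperboloidCoord z w).re = z.im / w.im := by
  simp only [hyperboloidCoord, UpperHalfPlane.cosh_dist', coe_re, coe_im]
  field_simp
  ring

lemma injective_hyperboloidCoord (z : ℍ) :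
    Function.Injective fun w : ℍ => hyperboloidCoord z w := by
  intro w w' h
  have hcosh : cosh (dist z w) = cosh (dist z w') := by
    rw [← sq_eq_sq₀ (cosh_pos _).le (cosh_pos _).le, ← one_add_norm_sq_hyperboloidCoord,
      ← one_add_norm_sq_hyperboloidCoord]
    exact congr_arg (1 + ‖·‖ ^ 2) h
  have him : w.im = w'.im := by
    have := congr_arg₂ (· - ·) hcosh (congr_arg Complex.re h)
    simpa [cosh_dist_sub_re_hyperboloidCoord, div_eq_div_iff_comm z.im, z.im_ne_zero] using this
  have hre : w.re = w'.re := by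
    simpa [hyperboloidCoord, him, w'.im_ne_zero] using congr_arg Complex.im h
  exact UpperHalfPlane.ext (Complex.ext hre him)

lemma surjective_hyperboloidCoord (z : ℍ) :
    Function.Surjective fun w : ℍ => hyperboloidCoord z w := by
  intro ζ
  have hz := z.im_pos
  set c := √(1 + ‖ζ‖ ^ 2)
  have hc : c ^ 2 = 1 + (ζ.re * ζ.re + ζ.im * ζ.im) :=
    (sq_sqrt (by positivity)).trans (by rw [← Complex.normSq_eq_norm_sq, Complex.normSq_apply])
  have hpos : 0 < c - ζ.re := sub_pos.2 (lt_of_pow_lt_pow_left₀ 2 (sqrt_nonneg _) (by nlinarith))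
  refine ⟨⟨⟨z.re - z.im / (c - ζ.re) * ζ.im, z.im / (c - ζ.re)⟩, div_pos hz hpos⟩, ?_⟩
  apply Complex.ext
  · simp only [hyperboloidCoord, sub_sub_cancel_left, even_two, Even.neg_pow, sub_sub_cancel]
    field_simp
    linear_combination (-1) * hc
  · simp only [hyperboloidCoord, sub_sub_cancel_left, even_two, Even.neg_pow, sub_sub_cancel]
    field_simp

theorem lintegral_hypVolume_coe (F : ℂ → ℝ≥0∞) :
    ∫⁻ w : ℍ, F w ∂hypVolume = ∫⁻ w in upperHalfPlaneSet, ENNReal.ofReal (1 / w.im ^ 2) * F w := by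
  have hemb := UpperHalfPlane.isOpenEmbedding_coe.measurableEmbedding
  have him : Measurable fun w : ℍ => w.im := UpperHalfPlane.continuous_im.measurable
  rw [hypVolume, lintegral_withDensity_eq_lintegral_mul_non_measurable _ (by fun_prop)
    (.of_forall fun _ => ENNReal.ofReal_lt_top),
    ← UpperHalfPlane.range_coe, ← hemb.map_comap, hemb.lintegral_map]
  rfl

theorem lintegral_hypVolume_hyperboloidCoord (z : ℍ) (F : ℂ → ℝ≥0∞) :
    ∫⁻ w : ℍ, F (hyperboloidCoord z w) ∂hypVolume =
      ∫⁻ ζ, ENNReal.ofReal (1 / √(1 + ‖ζ‖ ^ 2)) * F ζ := by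
  have hrange : hyperboloidCoord z '' upperHalfPlaneSet = Set.univ := by
    rw [← UpperHalfPlane.range_coe, ← Set.range_comp]
    exact (surjective_hyperboloidCoord z).range_eq
  have hinj : Set.InjOn (hyperboloidCoord z) upperHalfPlaneSet := fun w hw w' hw' h =>
    congr_arg UpperHalfPlane.coe (injective_hyperboloidCoord z (a₁ := ⟨w, hw⟩) (a₂ := ⟨w', hw'⟩) h)
  have hmeas : MeasurableSet upperHalfPlaneSet :=
    measurableSet_lt measurable_const Complex.measurable_im
  rw [← setLIntegral_univ (μ := (volume : Measure ℂ)), ← hrange,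
    lintegral_image_eq_lintegral_abs_det_fderiv_mul _ hmeas
    (fun w hw => (hasFDerivAt_hyperboloidCoord z hw).hasFDerivWithinAt) hinj,
    lintegral_hypVolume_coe fun w => F (hyperboloidCoord z w)]
  refine setLIntegral_congr_fun hmeas fun w (hw : 0 < w.im) => ?_
  have hdet := det_hyperboloidCoordDeriv z ⟨w, hw⟩
  have hcosh := one_add_norm_sq_hyperboloidCoord z ⟨w, hw⟩
  have hpos : 0 < cosh (dist z ⟨w, hw⟩) := cosh_pos _
  simp only at hdet hcosh ⊢
  rw [hdet, hcosh, sqrt_sq hpos.le, ← mul_assoc, ← ENNReal.ofReal_mul (abs_nonneg _), abs_of_nonneg]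
  · congr 2
    simp only [one_div, mk_im]
    field_simp
  · positivity

lemma lintegral_Ioo_neg_eq_two_mul_of_even {f : ℝ → ℝ≥0∞} (hf : Function.Even f) {a : ℝ}
    (ha : 0 < a) : ∫⁻ x in Set.Ioo (-a) a, f x = 2 * ∫⁻ x in Set.Ioo 0 a, f x := by
  have hneg : ∫⁻ x in Set.Ioo (-a) 0, f x = ∫⁻ x in Set.Ioo 0 a, f x := by
    have := (Measure.measurePreserving_neg (volume : Measure ℝ)).setLIntegral_comp_preimage_emb
      (Homeomorph.neg ℝ).measurableEmbedding f (Set.Ioo (-a) 0)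
    simpa [hf _] using this.symm
  rw [← Set.Ioo_union_Ico_eq_Ioo (neg_lt_zero.2 ha) ha.le,
    lintegral_union measurableSet_Ico (Set.disjoint_left.2 fun x hx hx' => hx.2.not_ge hx'.1), hneg,
    setLIntegral_congr Ioo_ae_eq_Ico.symm, two_mul]

lemma lintegral_norm_re_mul_conj (ζ₀ : ℂ) (F : ℝ → ℝ → ℝ≥0∞) :
    ∫⁻ ζ : ℂ, F ‖ζ‖ (ζ₀ * (starRingEnd ℂ) ζ).re = ∫⁻ ζ : ℂ, F ‖ζ‖ (‖ζ₀‖ * ζ.re) := by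
  obtain ⟨u, hu⟩ : ∃ u : Circle, ζ₀ = ‖ζ₀‖ * u := ⟨Circle.exp ζ₀.arg, by
    rw [Circle.coe_exp, Complex.norm_mul_exp_arg_mul_I]⟩
  rw [← (rotation u).measurePreserving.lintegral_comp_emb
    (rotation u).toHomeomorph.measurableEmbedding]
  refine lintegral_congr fun ζ => ?_
  congr 1
  · rw [LinearIsometryEquiv.norm_map]
  · have : (u : ℂ) * (starRingEnd ℂ) u = 1 := by simp [Complex.mul_conj]
    rw [rotation_apply, map_mul]
    nth_rw 1 [hu]
    rw [show (‖ζ₀‖ : ℂ) * u * ((starRingEnd ℂ) u * (starRingEnd ℂ) ζ) =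
        ‖ζ₀‖ * (starRingEnd ℂ) ζ by
      linear_combination (‖ζ₀‖ * (starRingEnd ℂ) ζ) * this, Complex.re_ofReal_mul, Complex.conj_re]

lemma lintegral_Ioi_zero_eq_sinh (f : ℝ → ℝ≥0∞) :
    ∫⁻ ρ in Set.Ioi 0, f ρ = ∫⁻ r in Set.Ioi 0, ENNReal.ofReal (cosh r) * f (sinh r) := by
  have himage : sinh '' Set.Ioi 0 = Set.Ioi 0 := by
    simpa using sinhOrderIso.image_Ioi 0
  nth_rw 1 [← himage]
  rw [lintegral_image_eq_lintegral_abs_deriv_mul measurableSet_Ioi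
    (fun r _ => (hasDerivAt_sinh r).hasDerivWithinAt) sinh_injective.injOn]
  simp only [abs_of_pos (cosh_pos _)]

lemma lintegral_norm_re {F : ℝ → ℝ → ℝ≥0∞} (hF : Measurable (Function.uncurry F)) :
    ∫⁻ ζ : ℂ, F ‖ζ‖ ζ.re =
      2 * ∫⁻ ρ in Set.Ioi 0, ENNReal.ofReal ρ * ∫⁻ θ in Set.Ioo 0 π, F ρ (ρ * cos θ) := by
  have hre (p : ℝ × ℝ) : (Complex.polarCoord.symm p).re = p.1 * cos p.2 := by
    simp [-Complex.ofReal_cos, -Complex.ofReal_sin]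
  simp only [← Complex.lintegral_comp_polarCoord_symm, hre, Complex.norm_polarCoord_symm,
    smul_eq_mul]
  rw [polarCoord_target, Measure.volume_eq_prod, ← Measure.prod_restrict,
    lintegral_prod _ (by fun_prop), ← lintegral_const_mul' _ _ ENNReal.ofNat_ne_top]
  refine setLIntegral_congr_fun measurableSet_Ioi fun ρ (hρ : 0 < ρ) => ?_
  simp only [abs_of_pos hρ]
  rw [lintegral_const_mul' _ _ ENNReal.ofReal_ne_top,
    lintegral_Ioo_neg_eq_two_mul_of_even (fun θ => by rw [cos_neg]) pi_pos, mul_left_comm]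

theorem lintegral_hypVolume_cosh_dist (z z' : ℍ) {G : ℝ → ℝ → ℝ≥0∞}
    (hG : Measurable (Function.uncurry G)) :
    ∫⁻ w, G (cosh (dist z w)) (cosh (dist z' w)) ∂hypVolume =
      2 * ∫⁻ r in Set.Ioi 0, ENNReal.ofReal (sinh r) * ∫⁻ θ in Set.Ioo 0 π,
        G (cosh r) (cosh r * cosh (dist z z') - sinh r * sinh (dist z z') * cos θ) := by
  set D := dist z z'
  set F : ℝ → ℝ → ℝ≥0∞ := fun ρ a => ENNReal.ofReal (1 / √(1 + ρ ^ 2)) *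
    G (√(1 + ρ ^ 2)) (√(1 + ρ ^ 2) * cosh D - a) with hF
  have hsqrt (r : ℝ) : √(1 + sinh r ^ 2) = cosh r := by
    rw [add_comm, ← cosh_sq, sqrt_sq (cosh_pos r).le]
  calc ∫⁻ w, G (cosh (dist z w)) (cosh (dist z' w)) ∂hypVolume
      = ∫⁻ ζ : ℂ, F ‖ζ‖ (hyperboloidCoord z z' * (starRingEnd ℂ) ζ).re := by
        rw [← lintegral_hypVolume_hyperboloidCoord z fun ζ => G (√(1 + ‖ζ‖ ^ 2))
          (√(1 + ‖ζ‖ ^ 2) * cosh D - (hyperboloidCoord z z' * (starRingEnd ℂ) ζ).re)]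
        simp_rw [norm_hyperboloidCoord, hsqrt, cosh_dist_eq_hyperboloidCoord z z']
        rfl
    _ = ∫⁻ ζ : ℂ, F ‖ζ‖ (sinh D * ζ.re) := by
        rw [lintegral_norm_re_mul_conj, norm_hyperboloidCoord]
    _ = 2 * ∫⁻ ρ in Set.Ioi 0, ENNReal.ofReal ρ *
          ∫⁻ θ in Set.Ioo 0 π, F ρ (sinh D * (ρ * cos θ)) :=
        lintegral_norm_re (F := fun ρ a => F ρ (sinh D * a)) (by unfold F; fun_prop)
    _ = 2 * ∫⁻ r in Set.Ioi 0, ENNReal.ofReal (sinh r) * ∫⁻ θ in Set.Ioo 0 π,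
          G (cosh r) (cosh r * cosh D - sinh r * sinh D * cos θ) := by
        rw [lintegral_Ioi_zero_eq_sinh]
        congr 1
        refine lintegral_congr fun r => ?_
        have hinv : ENNReal.ofReal (cosh r) * ENNReal.ofReal (1 / cosh r) = 1 := by
          rw [← ENNReal.ofReal_mul (cosh_pos r).le, mul_one_div_cancel (cosh_pos r).ne',
            ENNReal.ofReal_one]
        simp only [hF, hsqrt, lintegral_const_mul' _ _ ENNReal.ofReal_ne_top]
        rw [mul_left_comm, ← mul_assoc (ENNReal.ofReal (cosh r)), hinv, one_mul]
        simp only [mul_assoc, mul_left_comm (sinh D)]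

/-! ### Hyperbolic law of cosines and the angular integral -/

/-- `s ^ (-1 / 2)`, extended by `0` to `s ≤ 0`. -/
noncomputable def invSqrt (s : ℝ) : ℝ≥0∞ := ENNReal.ofReal (1 / √s)

lemma measurable_invSqrt : Measurable invSqrt := by
  unfold invSqrt
  fun_prop

lemma invSqrt_ne_top (s : ℝ) : invSqrt s ≠ ∞ := ENNReal.ofReal_ne_top

lemma invSqrt_of_nonpos {s : ℝ} (hs : s ≤ 0) : invSqrt s = 0 := by
  simp [invSqrt, sqrt_eq_zero_of_nonpos hs]

lemma pos_of_invSqrt_ne_zero {s : ℝ} (hs : invSqrt s ≠ 0) : 0 < s := by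
  contrapose! hs
  exact invSqrt_of_nonpos hs

lemma invSqrt_one : invSqrt 1 = 1 := by simp [invSqrt]

lemma invSqrt_mul {a : ℝ} (ha : 0 ≤ a) (b : ℝ) : invSqrt (a * b) = invSqrt a * invSqrt b := by
  rw [invSqrt, invSqrt, invSqrt, ← ENNReal.ofReal_mul (by positivity), sqrt_mul ha,
    one_div_mul_one_div]

lemma invSqrt_mul_self {a : ℝ} (ha : 0 ≤ a) : invSqrt (a * a) = ENNReal.ofReal a⁻¹ := by
  rw [invSqrt, sqrt_mul_self ha, one_div]

lemma ofReal_mul_invSqrt_sq_mul {a : ℝ} (ha : 0 < a) (b : ℝ) :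
    ENNReal.ofReal a * invSqrt (a ^ 2 * b) = invSqrt b := by
  rw [invSqrt_mul (sq_nonneg a), ← mul_assoc, invSqrt, ← ENNReal.ofReal_mul ha.le, sqrt_sq ha.le,
    mul_one_div_cancel ha.ne', ENNReal.ofReal_one, one_mul]

/-- The cosine of the angle between the sides `r` and `p = (s + D) / 2` of a hyperbolic triangle
whose third side is `t + D - p`. This is affine in `coth p`, which makes `s` a good variable of
integration in place of the angle. -/
noncomputable def cosAngle (r t D s : ℝ) : ℝ :=
  (sinh (t + D) - (cosh (t + D) - cosh r) * (cosh ((s + D) / 2) / sinh ((s + D) / 2))) / sinh r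

lemma hasDerivAt_cosAngle (r t D : ℝ) {s : ℝ} (hs : 0 < s + D) :
    HasDerivAt (cosAngle r t D)
      ((cosh (t + D) - cosh r) / (2 * sinh r * sinh ((s + D) / 2) ^ 2)) s := by
  have hp : 0 < sinh ((s + D) / 2) := sinh_pos_iff.2 (by linarith)
  have hhalf : HasDerivAt (fun s => (s + D) / 2) (1 / 2) s :=
    ((hasDerivAt_id s).add_const D).div_const 2
  have hcoth := (hhalf.cosh.div hhalf.sinh hp.ne').const_mul (cosh (t + D) - cosh r)
  refine ((hcoth.const_sub (sinh (t + D))).div_const (sinh r)).congr_deriv ?_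
  field_simp
  linear_combination (cosh (t + D) - cosh r) / sinh r * cosh_sq_sub_sinh_sq ((s + D) / 2)

lemma one_sub_cosAngle_sq {r D s : ℝ} (hr : 0 < r) (hs : 0 < s + D) (t : ℝ) :
    1 - cosAngle r t D s ^ 2 = (cosh (t + D) - cosh r) * (cosh r - cosh (s - t)) /
      (sinh r * sinh ((s + D) / 2)) ^ 2 := by
  rw [show s - t = 2 * ((s + D) / 2) - (t + D) by ring, cosh_sub (2 * _), cosh_two_mul,
    sinh_two_mul, cosAngle]
  field_simp
  linear_combination sinh ((s + D) / 2) ^ 2 * (sinh_sq r - sinh_sq (t + D)) +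
    (cosh (t + D) - cosh r) * cosh r * cosh_sq_sub_sinh_sq ((s + D) / 2)

lemma cosh_sub_cosAngle {r D s : ℝ} (hr : 0 < r) (hs : 0 < s + D) (t : ℝ) :
    cosh t - (cosh r * cosh D - sinh r * sinh D * cosAngle r t D s) =
      (cosh (t + D) - cosh r) * sinh ((s - D) / 2) / sinh ((s + D) / 2) := by
  have ht : cosh t = cosh (t + D) * cosh D - sinh (t + D) * sinh D := by
    rw [← cosh_sub, add_sub_cancel_right]
  rw [show (s - D) / 2 = (s + D) / 2 - D by ring, sinh_sub, ht, cosAngle]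
  field_simp
  ring

lemma cosh_sub_cosh (x y : ℝ) : cosh x - cosh y = 2 * sinh ((x + y) / 2) * sinh ((x - y) / 2) := by
  have hx := cosh_add ((x + y) / 2) ((x - y) / 2)
  have hy := cosh_sub ((x + y) / 2) ((x - y) / 2)
  ring_nf at hx hy ⊢
  linarith

lemma injOn_cosAngle {r t D : ℝ} (hr : 0 < r) (hκ : cosh r < cosh (t + D)) :
    Set.InjOn (cosAngle r t D) {s | 0 < s + D} := by
  intro s (hs : 0 < s + D) s' (hs' : 0 < s' + D) h
  have hr' : 0 < sinh r := sinh_pos_iff.2 hr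
  have hp : 0 < sinh ((s + D) / 2) := sinh_pos_iff.2 (by linarith)
  have hp' : 0 < sinh ((s' + D) / 2) := sinh_pos_iff.2 (by linarith)
  rw [cosAngle, cosAngle, div_left_inj' hr'.ne', sub_right_inj,
    mul_right_inj' (sub_pos.2 hκ).ne', div_eq_div_iff hp.ne' hp'.ne'] at h
  have : sinh ((s' + D) / 2 - (s + D) / 2) = 0 := by
    rw [sinh_sub]
    linarith
  linarith [sinh_eq_zero.1 this]

lemma exists_cosAngle_eq {r t D u : ℝ} (hr : 0 < r) (hrt : r < t + D) (hu : u < 1) :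
    ∃ s, 0 < s + D ∧ cosAngle r t D s = u := by
  have hr' : 0 < sinh r := sinh_pos_iff.2 hr
  have hκ : 0 < cosh (t + D) - cosh r := sub_pos.2 (cosh_strictMonoOn hr.le (hr.trans hrt).le hrt)
  set c := (sinh (t + D) - sinh r * u) / (cosh (t + D) - cosh r) with hc
  have hc1 : 1 < c := by
    have hexp : exp (-(t + D)) < exp (-r) := by gcongr
    rw [← cosh_sub_sinh, ← cosh_sub_sinh] at hexp
    rw [one_lt_div hκ]
    nlinarith
  have hinv : c⁻¹ ∈ Set.Ioo 0 1 := ⟨by positivity, inv_lt_one_of_one_lt₀ hc1⟩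
  refine ⟨2 * artanh c⁻¹ - D, by linarith [artanh_pos hinv], ?_⟩
  rw [cosAngle, show (2 * artanh c⁻¹ - D + D) / 2 = artanh c⁻¹ by ring, ← inv_div (sinh _) (cosh _),
    ← tanh_eq_sinh_div_cosh, tanh_artanh ⟨by linarith [hinv.1], hinv.2⟩, inv_inv, hc]
  field_simp
  ring

lemma image_cosAngle {r t D : ℝ} (hr : 0 < r) (hD : 0 ≤ D) (hrt : r < t + D) :
    cosAngle r t D '' {s | D < s ∧ cosh (s - t) < cosh r} =
      {u | 0 < 1 - u ^ 2 ∧ 0 < cosh t - (cosh r * cosh D - sinh r * sinh D * u)} := by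
  have hκ : 0 < cosh (t + D) - cosh r := sub_pos.2 (cosh_strictMonoOn hr.le (hr.trans hrt).le hrt)
  have key {s : ℝ} (hs : 0 < s + D) : (D < s ∧ cosh (s - t) < cosh r) ↔
      0 < 1 - cosAngle r t D s ^ 2 ∧
        0 < cosh t - (cosh r * cosh D - sinh r * sinh D * cosAngle r t D s) := by
    have hp : 0 < sinh ((s + D) / 2) := sinh_pos_iff.2 (by linarith)
    rw [one_sub_cosAngle_sq hr hs, cosh_sub_cosAngle hr hs,
      div_pos_iff_of_pos_right (by positivity), div_pos_iff_of_pos_right hp,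
      mul_pos_iff_of_pos_left hκ, mul_pos_iff_of_pos_left hκ, sinh_pos_iff,
      div_pos_iff_of_pos_right two_pos, sub_pos, sub_pos, and_comm]
  ext u
  constructor
  · rintro ⟨s, hs, rfl⟩
    exact (key (by linarith [hs.1])).1 hs
  · intro hu
    obtain ⟨s, hs, rfl⟩ := exists_cosAngle_eq hr hrt (u := u) (by nlinarith [hu.1])
    exact ⟨s, (key hs).2 hu, rfl⟩

lemma ofReal_mul_invSqrt_cosAngle {r t D s : ℝ} (hr : 0 < r) (hD : 0 ≤ D) (hrt : r < t + D)
    (hs : D < s) (hst : cosh (s - t) < cosh r) :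
    ENNReal.ofReal |(cosh (t + D) - cosh r) / (2 * sinh r * sinh ((s + D) / 2) ^ 2)| *
        (invSqrt (1 - cosAngle r t D s ^ 2) *
          invSqrt (cosh t - (cosh r * cosh D - sinh r * sinh D * cosAngle r t D s))) =
      invSqrt 2 * (invSqrt (cosh s - cosh D) * invSqrt (cosh r - cosh (s - t))) := by
  have hκ : 0 < cosh (t + D) - cosh r := sub_pos.2 (cosh_strictMonoOn hr.le (hr.trans hrt).le hrt)
  have hsD : 0 < s + D := by linarith
  have hcosh : 0 ≤ cosh s - cosh D :=
    sub_nonneg.2 (cosh_strictMonoOn.monotoneOn hD (hD.trans hs.le) hs.le)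
  have hu : 0 ≤ 1 - cosAngle r t D s ^ 2 := by
    rw [one_sub_cosAngle_sq hr hsD]
    exact div_nonneg (mul_nonneg hκ.le (sub_nonneg.2 hst.le)) (sq_nonneg _)
  have hprod : (1 - cosAngle r t D s ^ 2) *
        (cosh t - (cosh r * cosh D - sinh r * sinh D * cosAngle r t D s)) =
      ((cosh (t + D) - cosh r) / (2 * sinh r * sinh ((s + D) / 2) ^ 2)) ^ 2 *
        (2 * ((cosh s - cosh D) * (cosh r - cosh (s - t)))) := by
    rw [one_sub_cosAngle_sq hr hsD, cosh_sub_cosAngle hr hsD, cosh_sub_cosh s D]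
    field_simp
  rw [← invSqrt_mul hu, ← invSqrt_mul hcosh, ← invSqrt_mul two_pos.le, hprod,
    abs_of_pos (by positivity), ofReal_mul_invSqrt_sq_mul (by positivity)]

theorem lintegral_invSqrt_lawOfCosines {r t D : ℝ} (hr : 0 < r) (hD : 0 ≤ D) (hrt : r < t + D) :
    ∫⁻ u, invSqrt (1 - u ^ 2) * invSqrt (cosh t - (cosh r * cosh D - sinh r * sinh D * u)) =
      invSqrt 2 *
        ∫⁻ s in Set.Ioi D, invSqrt (cosh s - cosh D) * invSqrt (cosh r - cosh (s - t)) := by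
  have hκ : cosh r < cosh (t + D) := cosh_strictMonoOn hr.le (hr.trans hrt).le hrt
  set S := {s | D < s ∧ cosh (s - t) < cosh r} with hS_def
  have hS' : MeasurableSet {s | cosh (s - t) < cosh r} :=
    measurableSet_lt (by fun_prop : Measurable fun s => cosh (s - t)) measurable_const
  have hS : MeasurableSet S := measurableSet_Ioi.inter hS'
  have hpos {s} (hs : s ∈ S) : 0 < s + D := by linarith [hs.1]
  calc ∫⁻ u, invSqrt (1 - u ^ 2) * invSqrt (cosh t - (cosh r * cosh D - sinh r * sinh D * u))
      = ∫⁻ u in cosAngle r t D '' S, invSqrt (1 - u ^ 2) *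
          invSqrt (cosh t - (cosh r * cosh D - sinh r * sinh D * u)) := by
        refine (setLIntegral_eq_of_support_subset fun u hu => ?_).symm
        rw [hS_def, image_cosAngle hr hD hrt]
        exact ⟨pos_of_invSqrt_ne_zero (left_ne_zero_of_mul hu),
          pos_of_invSqrt_ne_zero (right_ne_zero_of_mul hu)⟩
    _ = ∫⁻ s in S, invSqrt 2 * (invSqrt (cosh s - cosh D) * invSqrt (cosh r - cosh (s - t))) := by
        rw [lintegral_image_eq_lintegral_abs_deriv_mul hS
          (fun s hs => (hasDerivAt_cosAngle r t D (hpos hs)).hasDerivWithinAt)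
          ((injOn_cosAngle hr hκ).mono fun s hs => hpos hs)]
        exact setLIntegral_congr_fun hS fun s hs => ofReal_mul_invSqrt_cosAngle hr hD hrt hs.1 hs.2
    _ = invSqrt 2 * ∫⁻ s in Set.Ioi D,
          invSqrt (cosh s - cosh D) * invSqrt (cosh r - cosh (s - t)) := by
        rw [lintegral_const_mul' _ _ (invSqrt_ne_top 2),
          show S = {s | cosh (s - t) < cosh r} ∩ Set.Ioi D from Set.inter_comm _ _,
          ← Measure.restrict_restrict hS']
        congr 1
        refine setLIntegral_eq_of_support_subset fun s hs => ?_
        exact sub_pos.1 (pos_of_invSqrt_ne_zero (right_ne_zero_of_mul hs))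

/-! ### Arcsine integrals -/

theorem lintegral_invSqrt_sub_sq_mul {ρ : ℝ} (hρ : 0 < ρ) (m : ℝ) (g : ℝ → ℝ≥0∞) :
    ∫⁻ v, invSqrt (ρ ^ 2 - (v - m) ^ 2) * g v = ∫⁻ θ in Set.Ioo 0 π, g (m + ρ * cos θ) := by
  have hsupp : (Function.support fun v => invSqrt (ρ ^ 2 - (v - m) ^ 2) * g v) ⊆
      (fun θ => m + ρ * cos θ) '' Set.Ioo 0 π := by
    intro v hv
    have hlt : |v - m| < |ρ| :=
      sq_lt_sq.1 (sub_pos.1 (pos_of_invSqrt_ne_zero (left_ne_zero_of_mul hv)))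
    have hx : |(v - m) / ρ| < 1 := by rwa [abs_div, div_lt_one (abs_pos.2 hρ.ne')]
    obtain ⟨hx₁, hx₂⟩ := abs_lt.1 hx
    refine ⟨arccos ((v - m) / ρ), ⟨arccos_pos.2 hx₂, arccos_lt_pi.2 hx₁⟩, ?_⟩
    simp only [cos_arccos hx₁.le hx₂.le, mul_div_cancel₀ _ hρ.ne', add_sub_cancel]
  have hinj : Set.InjOn (fun θ => m + ρ * cos θ) (Set.Ioo 0 π) := fun θ hθ θ' hθ' h =>
    injOn_cos (Set.Ioo_subset_Icc_self hθ) (Set.Ioo_subset_Icc_self hθ')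
      (mul_left_cancel₀ hρ.ne' (add_left_cancel h))
  rw [← setLIntegral_eq_of_support_subset hsupp, lintegral_image_eq_lintegral_abs_deriv_mul
    measurableSet_Ioo
    (fun θ _ => (((hasDerivAt_cos θ).const_mul ρ).const_add m).hasDerivWithinAt) hinj]
  refine setLIntegral_congr_fun measurableSet_Ioo fun θ hθ => ?_
  have hsin : 0 < ρ * sin θ := mul_pos hρ (sin_pos_of_mem_Ioo hθ)
  rw [show ρ ^ 2 - (m + ρ * cos θ - m) ^ 2 = (ρ * sin θ) ^ 2 * 1 by
    rw [mul_pow, sin_sq]; ring, mul_neg, abs_neg, abs_of_pos hsin, ← mul_assoc,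
    ofReal_mul_invSqrt_sq_mul hsin, invSqrt_one, one_mul]

lemma lintegral_invSqrt_one_sub_sq_mul (g : ℝ → ℝ≥0∞) :
    ∫⁻ u, invSqrt (1 - u ^ 2) * g u = ∫⁻ θ in Set.Ioo 0 π, g (cos θ) := by
  simpa using lintegral_invSqrt_sub_sq_mul one_pos 0 g

theorem lintegral_invSqrt_sub_mul_invSqrt_sub (a b : ℝ) :
    ∫⁻ v, invSqrt (b - v) * invSqrt (v - a) = if a < b then ENNReal.ofReal π else 0 := by
  have hsupp (v : ℝ) (hv : invSqrt (b - v) * invSqrt (v - a) ≠ 0) : a < v ∧ v < b :=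
    ⟨sub_pos.1 (pos_of_invSqrt_ne_zero (right_ne_zero_of_mul hv)),
      sub_pos.1 (pos_of_invSqrt_ne_zero (left_ne_zero_of_mul hv))⟩
  split_ifs with hab
  · have hprod (v : ℝ) : invSqrt (b - v) * invSqrt (v - a) =
        invSqrt (((b - a) / 2) ^ 2 - (v - (a + b) / 2) ^ 2) * 1 := by
      rw [show ((b - a) / 2) ^ 2 - (v - (a + b) / 2) ^ 2 = (b - v) * (v - a) by ring, mul_one]
      rcases le_or_gt v b with hv | hv
      · rw [invSqrt_mul (sub_nonneg.2 hv)]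
      · rw [invSqrt_of_nonpos (sub_neg.2 hv).le, zero_mul, invSqrt_of_nonpos]
        nlinarith
    simp only [hprod]
    rw [lintegral_invSqrt_sub_sq_mul (by linarith) _ fun _ => 1, setLIntegral_one, volume_Ioo,
      sub_zero]
  · refine (lintegral_congr fun v => ?_).trans lintegral_zero
    by_contra hv
    exact hab ((hsupp v hv).1.trans (hsupp v hv).2)

lemma lintegral_Ioi_one_eq_cosh (G : ℝ → ℝ≥0∞) :
    ∫⁻ u in Set.Ioi 1, G u = ∫⁻ r in Set.Ioi 0, ENNReal.ofReal (sinh r) * G (cosh r) := by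
  have himage : cosh '' Set.Ioi 0 = Set.Ioi 1 := by
    ext u
    constructor
    · rintro ⟨r, hr, rfl⟩
      exact one_lt_cosh.2 (ne_of_gt hr)
    · intro hu
      exact ⟨arcosh u, arcosh_pos hu, cosh_arcosh (le_of_lt hu)⟩
  rw [← himage, lintegral_image_eq_lintegral_abs_deriv_mul measurableSet_Ioi
    (fun r _ => (hasDerivAt_cosh r).hasDerivWithinAt)
    (cosh_strictMonoOn.injOn.mono Set.Ioi_subset_Ici_self)]
  refine setLIntegral_congr_fun measurableSet_Ioi fun r hr => ?_
  simp only [abs_of_pos (sinh_pos_iff.2 hr)]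

lemma lintegral_sinh_mul_invSqrt_cosh (t x : ℝ) :
    ∫⁻ r in Set.Ioi 0, ENNReal.ofReal (sinh r) *
        (invSqrt (cosh t - cosh r) * invSqrt (cosh r - cosh x)) =
      if |x| < |t| then ENNReal.ofReal π else 0 := by
  rw [← lintegral_Ioi_one_eq_cosh fun u => invSqrt (cosh t - u) * invSqrt (u - cosh x),
    setLIntegral_eq_of_support_subset, lintegral_invSqrt_sub_mul_invSqrt_sub]
  · simp only [cosh_lt_cosh]
  · intro u hu
    exact (one_le_cosh x).trans_lt
      (sub_pos.1 (pos_of_invSqrt_ne_zero (right_ne_zero_of_mul hu)))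

lemma ofReal_sinh_mul_lintegral_invSqrt {r t t' D : ℝ} (hr : 0 < r) (ht : 0 < t) (htt' : t ≤ t')
    (hD : 0 ≤ D) :
    ENNReal.ofReal (sinh r) * ∫⁻ θ in Set.Ioo 0 π, invSqrt (cosh t - cosh r) *
        invSqrt (cosh t' - (cosh r * cosh D - sinh r * sinh D * cos θ)) =
      ∫⁻ s in Set.Ioi D, invSqrt 2 * (invSqrt (cosh s - cosh D) * (ENNReal.ofReal (sinh r) *
        (invSqrt (cosh t - cosh r) * invSqrt (cosh r - cosh (s - t'))))) := by
  rcases lt_or_ge r t with hrt | hrt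
  · rw [lintegral_const_mul' _ _ (invSqrt_ne_top _), ← lintegral_invSqrt_one_sub_sq_mul fun u =>
        invSqrt (cosh t' - (cosh r * cosh D - sinh r * sinh D * u)),
      lintegral_invSqrt_lawOfCosines hr hD (by linarith),
      ← lintegral_const_mul' _ _ (invSqrt_ne_top _), ← lintegral_const_mul' _ _ (invSqrt_ne_top _),
      ← lintegral_const_mul' _ _ ENNReal.ofReal_ne_top]
    refine lintegral_congr fun s => ?_
    ring
  · have hzero : invSqrt (cosh t - cosh r) = 0 :=
      invSqrt_of_nonpos (sub_nonpos.2 (cosh_strictMonoOn.monotoneOn ht.le hr.le hrt))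
    simp only [hzero, zero_mul, mul_zero, lintegral_zero]

theorem lintegral_sinh_mul_lintegral_invSqrt {t t' D : ℝ} (ht : 0 < t) (htt' : t ≤ t')
    (hD : 0 ≤ D) :
    ∫⁻ r in Set.Ioi 0, ENNReal.ofReal (sinh r) * ∫⁻ θ in Set.Ioo 0 π, invSqrt (cosh t - cosh r) *
        invSqrt (cosh t' - (cosh r * cosh D - sinh r * sinh D * cos θ)) =
      invSqrt 2 * ENNReal.ofReal π *
        ∫⁻ s in Set.Ioo (t' - t) (t' + t), invSqrt (cosh s - cosh D) := by
  have := measurable_invSqrt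
  rw [setLIntegral_congr_fun measurableSet_Ioi fun r hr =>
      ofReal_sinh_mul_lintegral_invSqrt hr ht htt' hD, lintegral_lintegral_swap (by fun_prop)]
  have hinner (s : ℝ) : ∫⁻ r in Set.Ioi 0, invSqrt 2 * (invSqrt (cosh s - cosh D) *
      (ENNReal.ofReal (sinh r) *
        (invSqrt (cosh t - cosh r) * invSqrt (cosh r - cosh (s - t'))))) =
      (Set.Ioo (t' - t) (t' + t)).indicator
        (fun s => invSqrt 2 * ENNReal.ofReal π * invSqrt (cosh s - cosh D)) s := by
    have hmem : |s - t'| < |t| ↔ s ∈ Set.Ioo (t' - t) (t' + t) := by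
      rw [abs_of_pos ht, ← Real.dist_eq, ← ball_eq_Ioo, Metric.mem_ball]
    rw [lintegral_const_mul' _ _ (invSqrt_ne_top _), lintegral_const_mul' _ _ (invSqrt_ne_top _),
      lintegral_sinh_mul_invSqrt_cosh]
    simp only [hmem, Set.indicator_apply, mul_ite, mul_zero]
    congr 1
    ring
  have hsupp : Function.support ((Set.Ioo (t' - t) (t' + t)).indicator
      fun s => invSqrt 2 * ENNReal.ofReal π * invSqrt (cosh s - cosh D)) ⊆ Set.Ioi D := by
    intro s hs
    obtain ⟨hmem, hne⟩ := Set.indicator_apply_ne_zero.1 hs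
    have hcosh := sub_pos.1 (pos_of_invSqrt_ne_zero (right_ne_zero_of_mul hne))
    rwa [cosh_lt_cosh, abs_of_nonneg hD, abs_of_pos (by linarith [hmem.1])] at hcosh
  simp_rw [hinner]
  rw [setLIntegral_eq_of_support_subset hsupp, lintegral_indicator measurableSet_Ioo,
    lintegral_const_mul' _ _ (ENNReal.mul_ne_top (invSqrt_ne_top _) ENNReal.ofReal_ne_top)]

/-! ### Convolution of Abel kernels -/

lemma abelKernel_nonneg (t r : ℝ) : 0 ≤ abelKernel t r := by
  unfold abelKernel
  positivity

lemma abelKernel_of_le {t r : ℝ} (h : t ≤ r) : abelKernel t r = 0 := by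
  rw [abelKernel, if_neg h.not_gt, mul_zero]

lemma ofReal_abelKernel {t r : ℝ} (ht : 0 ≤ t) (hr : 0 ≤ r) :
    ENNReal.ofReal (abelKernel t r) =
      ENNReal.ofReal (1 / (2 * √2 * π)) * invSqrt (cosh t - cosh r) := by
  rw [abelKernel, ENNReal.ofReal_mul (by positivity)]
  congr 1
  split_ifs with h
  · rfl
  · rw [ENNReal.ofReal_zero, invSqrt_of_nonpos (sub_nonpos.2
      (cosh_strictMonoOn.monotoneOn ht hr (not_lt.1 h)))]

lemma two_mul_abelKernel_const_sq :
    ENNReal.ofReal (1 / (2 * √2 * π)) * ENNReal.ofReal (1 / (2 * √2 * π)) *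
      (2 * (invSqrt 2 * ENNReal.ofReal π)) = 2⁻¹ * ENNReal.ofReal (1 / (2 * √2 * π)) := by
  rw [← ENNReal.ofReal_ofNat 2, ← ENNReal.ofReal_inv_of_pos two_pos, invSqrt,
    ← ENNReal.ofReal_mul (by positivity), ← ENNReal.ofReal_mul (by positivity),
    ← ENNReal.ofReal_mul (by positivity), ← ENNReal.ofReal_mul (by positivity),
    ← ENNReal.ofReal_mul (by positivity)]
  congr 1
  have h2 : √2 ^ 2 = 2 := sq_sqrt two_pos.le
  field_simp
  rw [h2]

theorem lintegral_abelKernel_mul_of_le (z z' : ℍ) {t t' : ℝ} (ht : 0 < t) (htt' : t ≤ t') :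
    ∫⁻ x, ENNReal.ofReal (abelKernel t (dist z x) * abelKernel t' (dist z' x)) ∂hypVolume =
      2⁻¹ * ∫⁻ s in Set.Ioo (t' - t) (t' + t), ENNReal.ofReal (abelKernel s (dist z z')) := by
  have := measurable_invSqrt
  set c := ENNReal.ofReal (1 / (2 * √2 * π))
  have hc_top : c ≠ ∞ := ENNReal.ofReal_ne_top
  calc ∫⁻ x, ENNReal.ofReal (abelKernel t (dist z x) * abelKernel t' (dist z' x)) ∂hypVolume
      = c * c * ∫⁻ x, invSqrt (cosh t - cosh (dist z x)) * invSqrt (cosh t' - cosh (dist z' x))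
          ∂hypVolume := by
        rw [← lintegral_const_mul' _ _ (ENNReal.mul_ne_top hc_top hc_top)]
        refine lintegral_congr fun x => ?_
        rw [ENNReal.ofReal_mul (abelKernel_nonneg _ _), ofReal_abelKernel ht.le dist_nonneg,
          ofReal_abelKernel (ht.le.trans htt') dist_nonneg, mul_mul_mul_comm]
    _ = c * c * (2 * (invSqrt 2 * ENNReal.ofReal π)) *
          ∫⁻ s in Set.Ioo (t' - t) (t' + t), invSqrt (cosh s - cosh (dist z z')) := by
        rw [lintegral_hypVolume_cosh_dist z z'
            (G := fun a b => invSqrt (cosh t - a) * invSqrt (cosh t' - b)) (by fun_prop),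
          lintegral_sinh_mul_lintegral_invSqrt ht htt' dist_nonneg]
        simp only [mul_assoc]
    _ = 2⁻¹ * ∫⁻ s in Set.Ioo (t' - t) (t' + t), ENNReal.ofReal (abelKernel s (dist z z')) := by
        rw [two_mul_abelKernel_const_sq, mul_assoc, ← lintegral_const_mul' _ _ hc_top]
        congr 1
        refine setLIntegral_congr_fun measurableSet_Ioo fun s hs => ?_
        exact (ofReal_abelKernel (by linarith [hs.1]) dist_nonneg).symm

theorem lintegral_abelKernel_mul (z z' : ℍ) {t t' : ℝ} (ht : 0 < t) (ht' : 0 < t') :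
    ∫⁻ x, ENNReal.ofReal (abelKernel t (dist z x) * abelKernel t' (dist z' x)) ∂hypVolume =
      2⁻¹ * ∫⁻ s in Set.Ioo |t - t'| (t + t'), ENNReal.ofReal (abelKernel s (dist z z')) := by
  rcases le_total t t' with htt' | htt'
  · rw [lintegral_abelKernel_mul_of_le z z' ht htt', abs_sub_comm,
      abs_of_nonneg (sub_nonneg.2 htt'), add_comm t]
  · simp only [mul_comm (abelKernel t _)]
    rw [lintegral_abelKernel_mul_of_le z' z ht' htt', abs_of_nonneg (sub_nonneg.2 htt'), dist_comm]

lemma measurable_abelKernel (t : ℝ) : Measurable (abelKernel t) :=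
  (Measurable.ite measurableSet_Iio (by fun_prop) measurable_const).const_mul _

theorem integral_abelKernel_mul (z z' : ℍ) {t t' : ℝ} (ht : 0 < t) (ht' : 0 < t') :
    ∫ x, abelKernel t (dist z x) * abelKernel t' (dist z' x) ∂hypVolume =
      (2⁻¹ * ∫⁻ s in Set.Ioo |t - t'| (t + t'),
        ENNReal.ofReal (abelKernel s (dist z z'))).toReal := by
  have hdist (w : ℍ) : Measurable (dist w) := (continuous_const.dist continuous_id).measurable
  rw [← lintegral_abelKernel_mul z z' ht ht', integral_eq_lintegral_of_nonneg_ae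
    (.of_forall fun x => mul_nonneg (abelKernel_nonneg _ _) (abelKernel_nonneg _ _))
    (((measurable_abelKernel t).comp (hdist z)).mul
      ((measurable_abelKernel t').comp (hdist z'))).aestronglyMeasurable]

lemma invSqrt_le_invSqrt {a b : ℝ} (ha : 0 < a) (hab : a ≤ b) : invSqrt b ≤ invSqrt a :=
  ENNReal.ofReal_le_ofReal (one_div_le_one_div_of_le (sqrt_pos.2 ha) (sqrt_le_sqrt hab))

lemma lintegral_Ioi_invSqrt_exp_sub_one_le (m : ℝ) :
    ∫⁻ s in Set.Ioi m, invSqrt (exp (s - m) - 1) ≤ ENNReal.ofReal π := by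
  set f : ℝ → ℝ := fun s => 2 * arctan √(exp (s - m) - 1)
  have hderiv : ∀ s ∈ Set.Ioi m, HasDerivWithinAt f (1 / √(exp (s - m) - 1)) (Set.Ioi m) s := by
    intro s hs
    have hpos : 0 < exp (s - m) - 1 := sub_pos.2 (one_lt_exp_iff.2 (sub_pos.2 hs))
    have hexp : HasDerivAt (fun s => exp (s - m) - 1) (exp (s - m)) s := by
      simpa using (((hasDerivAt_id s).sub_const m).exp).sub_const 1
    refine (((hexp.sqrt hpos.ne').arctan.const_mul 2).congr_deriv ?_).hasDerivWithinAt
    rw [sq_sqrt hpos.le]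
    field_simp
    ring
  have hmono : Monotone f := fun s s' hs => by
    simp only [f]
    gcongr
  have hrange : f '' Set.Ioi m ⊆ Set.Ico 0 π := by
    rintro _ ⟨s, -, rfl⟩
    exact ⟨mul_nonneg two_pos.le (arctan_nonneg.2 (sqrt_nonneg _)),
      by linarith [arctan_lt_pi_div_two √(exp (s - m) - 1)]⟩
  calc ∫⁻ s in Set.Ioi m, invSqrt (exp (s - m) - 1)
      = volume (f '' Set.Ioi m) := lintegral_deriv_eq_volume_image_of_monotoneOn
        measurableSet_Ioi hderiv (hmono.monotoneOn _)
    _ ≤ ENNReal.ofReal π := (measure_mono hrange).trans_eq (by rw [volume_Ico, sub_zero])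

lemma sinh_mul_exp_sub_one_le (m s : ℝ) :
    sinh m * (exp (s - m) - 1) ≤ cosh s - cosh m := by
  have hcosh : cosh s = cosh m * cosh (s - m) + sinh m * sinh (s - m) := by
    rw [← cosh_add, add_sub_cancel]
  rw [hcosh, ← cosh_add_sinh (s - m)]
  nlinarith [sinh_lt_cosh m, one_le_cosh (s - m)]

theorem lintegral_Ioo_abelKernel_le {a D : ℝ} (hD : 0 ≤ D) (hm : 0 < max a D) (b : ℝ) :
    ∫⁻ s in Set.Ioo a b, ENNReal.ofReal (abelKernel s D) ≤ invSqrt (sinh (max a D)) := by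
  set m := max a D
  have hsinh : 0 < sinh m := sinh_pos_iff.2 hm
  have hpt (s : ℝ) (hs : s ∈ Set.Ioo a b) : ENNReal.ofReal (abelKernel s D) ≤
      (Set.Ioi m).indicator (fun s => ENNReal.ofReal (1 / (2 * √2 * π)) *
        (invSqrt (sinh m) * invSqrt (exp (s - m) - 1))) s := by
    rcases le_or_gt s D with hsD | hsD
    · simp [abelKernel_of_le hsD]
    · have hms : s ∈ Set.Ioi m := max_lt hs.1 hsD
      have hexp : 0 < exp (s - m) - 1 := sub_pos.2 (one_lt_exp_iff.2 (sub_pos.2 hms))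
      have hcosh : cosh D ≤ cosh m := cosh_strictMonoOn.monotoneOn hD hm.le (le_max_right _ _)
      rw [Set.indicator_of_mem hms, ofReal_abelKernel (hm.trans (Set.mem_Ioi.1 hms)).le hD,
        ← invSqrt_mul hsinh.le]
      gcongr
      exact invSqrt_le_invSqrt (by positivity) ((sinh_mul_exp_sub_one_le m s).trans (by gcongr))
  calc ∫⁻ s in Set.Ioo a b, ENNReal.ofReal (abelKernel s D)
      ≤ ∫⁻ s in Set.Ioi m, ENNReal.ofReal (1 / (2 * √2 * π)) *
          (invSqrt (sinh m) * invSqrt (exp (s - m) - 1)) := by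
        rw [← lintegral_indicator measurableSet_Ioi]
        exact (setLIntegral_mono' measurableSet_Ioo hpt).trans (setLIntegral_le_lintegral _ _)
    _ ≤ ENNReal.ofReal (1 / (2 * √2 * π)) * (invSqrt (sinh m) * ENNReal.ofReal π) := by
        rw [lintegral_const_mul' _ _ ENNReal.ofReal_ne_top,
          lintegral_const_mul' _ _ (invSqrt_ne_top _)]
        gcongr
        exact lintegral_Ioi_invSqrt_exp_sub_one_le m
    _ = ENNReal.ofReal (1 / (2 * √2)) * invSqrt (sinh m) := by
        rw [mul_comm (invSqrt _), ← mul_assoc, ← ENNReal.ofReal_mul (by positivity)]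
        congr 2
        field_simp
    _ ≤ invSqrt (sinh m) := by
        refine mul_le_of_le_one_left zero_le (ENNReal.ofReal_le_one.2 ?_)
        rw [div_le_one (by positivity)]
        nlinarith [one_lt_sqrt_two]

lemma lintegral_Ioo_inv_sinh_half {b : ℝ} (hb : 0 < b) :
    ∫⁻ s in Set.Ioo 0 b, ENNReal.ofReal (sinh (s / 2))⁻¹ = ∞ := by
  have hsinh : HasDerivAt (fun s => sinh (s / 2)) (1 / 2) 0 := by
    simpa using ((hasDerivAt_id (0 : ℝ)).div_const 2).sinh
  have hbigO : (fun s : ℝ => (s - 0)⁻¹) =O[𝓝[≠] 0] fun s => (sinh (s / 2))⁻¹ := by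
    refine Asymptotics.IsBigO.inv_rev ?_ ?_
    · simpa using hsinh.isBigO_sub.mono nhdsWithin_le_nhds
    · filter_upwards [self_mem_nhdsWithin] with s hs hs'
      exact absurd (by simpa using hs') hs
  have hnonneg : ∀ s ∈ Set.Ioo 0 b, 0 ≤ (sinh (s / 2))⁻¹ := fun s hs =>
    inv_nonneg.2 (sinh_nonneg_iff.2 (half_pos hs.1).le)
  by_contra htop
  refine not_intervalIntegrable_of_sub_inv_isBigO_punctured hbigO hb.ne Set.left_mem_uIcc ?_
  rw [intervalIntegrable_iff_integrableOn_Ioo_of_le hb.le]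
  exact (lintegral_ofReal_ne_top_iff_integrable (by fun_prop)
    (ae_restrict_of_forall_mem measurableSet_Ioo hnonneg)).1 htop

lemma lintegral_Ioo_abelKernel_zero {b : ℝ} (hb : 0 < b) :
    ∫⁻ s in Set.Ioo 0 b, ENNReal.ofReal (abelKernel s 0) = ∞ := by
  have hpt (s : ℝ) (hs : s ∈ Set.Ioo 0 b) : ENNReal.ofReal (abelKernel s 0) =
      ENNReal.ofReal (1 / (2 * √2 * π)) * invSqrt 2 * ENNReal.ofReal (sinh (s / 2))⁻¹ := by
    have hsinh : 0 ≤ sinh (s / 2) := sinh_nonneg_iff.2 (half_pos hs.1).le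
    have hcosh : cosh s - cosh 0 = 2 * (sinh (s / 2) * sinh (s / 2)) := by
      rw [cosh_sub_cosh, add_zero, sub_zero, mul_assoc]
    rw [ofReal_abelKernel hs.1.le le_rfl, hcosh, invSqrt_mul two_pos.le,
      invSqrt_mul_self hsinh, ← mul_assoc]
  rw [setLIntegral_congr_fun measurableSet_Ioo hpt, lintegral_const_mul' _ _
    (ENNReal.mul_ne_top ENNReal.ofReal_ne_top (invSqrt_ne_top _)), lintegral_Ioo_inv_sinh_half hb,
    ENNReal.mul_top]
  simp [invSqrt, pi_pos]

/-- Bound on the convolution of two Abel wave kernels: for `z, z' ∈ ℍ` and `t, t' > 0`,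
`∫_ℍ A(t,d(z,x)) A(t',d(z',x)) dx ≤ 1_{[0,t+t']}(d(z,z')) / √(sinh(max(|t-t'|, d(z,z'))))`. -/
theorem abelKernel_convolution_bound (z z' : UpperHalfPlane) (t t' : ℝ)
    (ht : 0 < t) (ht' : 0 < t') :
    ∫ x, abelKernel t (dist z x) * abelKernel t' (dist z' x) ∂hypVolume
      ≤ if dist z z' ≤ t + t' then
          1 / Real.sqrt (Real.sinh (max |t - t'| (dist z z'))) else 0 := by
  rw [integral_abelKernel_mul z z' ht ht']
  split_ifs with hD
  · -- If the maximum vanishes, the convolution diverges: both sides are then `0` by convention.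
    rcases eq_or_lt_of_le (le_max_of_le_left (abs_nonneg (t - t')) : 0 ≤ max _ (dist z z'))
      with hm | hm
    · have hD0 : dist z z' = 0 := le_antisymm (hm ▸ le_max_right _ _) dist_nonneg
      have htt' : |t - t'| = 0 := le_antisymm (hm ▸ le_max_left _ _) (abs_nonneg _)
      rw [hD0, htt', lintegral_Ioo_abelKernel_zero (add_pos ht ht')]
      simp
    · refine ENNReal.toReal_le_of_le_ofReal (by positivity) ?_
      exact (mul_le_of_le_one_left zero_le (by norm_num)).trans
        (lintegral_Ioo_abelKernel_le dist_nonneg hm _)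
  · have hzero : ∀ s ∈ Set.Ioo |t - t'| (t + t'), ENNReal.ofReal (abelKernel s (dist z z')) = 0 :=
      fun s hs => by rw [abelKernel_of_le (hs.2.trans (not_le.1 hD)).le, ENNReal.ofReal_zero]
    rw [setLIntegral_eq_zero measurableSet_Ioo hzero, mul_zero, ENNReal.toReal_zero]
end

section
/- Let $z, z' \in \mathbb{H}$ and $t, t' > 0$. Then $\int_{\mathbb{H}} \frac{\mathbf{1}_{[0,t]}(d(x,z))\,\mathbf{1}_{[0,t']}(d(x,z'))}{\sqrt{\sinh(d(x,z))}\,\sqrt{\sinh(d(x,z'))}}\,dx \leq \mathbf{1}_{[0,t+t']}(d(z,z'))\cdot 4\pi\min(t,t')$. -/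
open MeasureTheory UpperHalfPlane Real
open scoped ENNReal

/-!
In geodesic polar coordinates around `z` the area element is `sinh r dr dθ`, so `1 / sinh d(x, z)`
has integral exactly `2πm` over the ball of radius `m ≥ 0`. A point `x` of the intersection of the
two balls that is nearer to `z` than to `z'` lies in the ball of radius `min t t'` around `z`, and
the integrand there is at most `1 / sinh d(x, z)`; the points nearer to `z'` are treated in the same
way, and the two contributions add up to `4π min t t'`.

Polar coordinates are read off in the Poincaré disc centered at `z`, where `x` has Euclidean norm
`ρ = tanh (d(x, z) / 2)` and the area density is `4 / (1 - ρ²)²`.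
-/

open Metric
open scoped ComplexConjugate

/-- The Möbius transformation taking the upper half-plane to the unit disc and `z` to `0`. It passes
to the Poincaré disc model, where hyperbolic circles around `z` are Euclidean circles around `0`. -/
noncomputable def cayleyTransform (z : ℍ) (w : ℂ) : ℂ := (w - z) / (w - conj (z : ℂ))

theorem sub_conj_coe_ne_zero (z : ℍ) {w : ℂ} (hw : 0 < w.im) : w - conj (z : ℂ) ≠ 0 := by
  intro h
  have him := congrArg Complex.im h
  simp only [Complex.sub_im, Complex.conj_im, coe_im, sub_neg_eq_add, Complex.zero_im] at him
  linarith [z.im_pos]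

theorem norm_cayleyTransform_coe (z x : ℍ) : ‖cayleyTransform z x‖ = tanh (dist x z / 2) := by
  rw [cayleyTransform, norm_div, tanh_half_dist, Complex.dist_eq, Complex.dist_eq]

theorem hasDerivAt_cayleyTransform (z : ℍ) {w : ℂ} (hw : w - conj (z : ℂ) ≠ 0) :
    HasDerivAt (cayleyTransform z) (2 * z.im * Complex.I / (w - conj (z : ℂ)) ^ 2) w := by
  refine (((hasDerivAt_id' w).sub_const _).fun_div
    ((hasDerivAt_id' w).sub_const _) hw).congr_deriv ?_
  congr 1
  rw [one_mul, mul_one, sub_sub_sub_cancel_left, Complex.sub_conj, coe_im]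
  push_cast
  ring

theorem one_sub_sq_norm_cayleyTransform (z : ℍ) {w : ℂ} (hw : w - conj (z : ℂ) ≠ 0) :
    1 - ‖cayleyTransform z w‖ ^ 2 = 4 * z.im * w.im / ‖w - conj (z : ℂ)‖ ^ 2 := by
  rw [cayleyTransform, norm_div, div_pow,
    one_sub_div (pow_ne_zero 2 (norm_ne_zero_iff.2 hw))]
  congr 1
  simp only [Complex.sq_norm, Complex.normSq_apply, Complex.sub_re, Complex.sub_im,
    Complex.conj_re, Complex.conj_im, coe_re, coe_im]
  ring

theorem norm_cayleyTransform_lt_one_iff (z : ℍ) {w : ℂ} (hw : w - conj (z : ℂ) ≠ 0) :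
    ‖cayleyTransform z w‖ < 1 ↔ 0 < w.im := by
  rw [← sq_lt_one_iff₀ (norm_nonneg _), ← sub_pos, one_sub_sq_norm_cayleyTransform z hw,
    div_pos_iff_of_pos_right (by positivity), mul_pos_iff_of_pos_left (by positivity)]

theorem bijOn_cayleyTransform (z : ℍ) :
    Set.BijOn (cayleyTransform z) upperHalfPlaneSet (ball 0 1) := by
  have hz : (z : ℂ) - conj (z : ℂ) ≠ 0 := sub_conj_coe_ne_zero z z.im_pos
  refine ⟨fun w hw => ?_, fun w hw w' hw' h => ?_, fun v hv => ?_⟩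
  · rw [mem_ball_zero_iff]
    exact (norm_cayleyTransform_lt_one_iff z (sub_conj_coe_ne_zero z hw)).2 hw
  · rw [cayleyTransform, cayleyTransform,
      div_eq_div_iff (sub_conj_coe_ne_zero z hw) (sub_conj_coe_ne_zero z hw')] at h
    exact mul_left_cancel₀ hz (by linear_combination h)
  · rw [mem_ball_zero_iff] at hv
    have hv1 : 1 - v ≠ 0 := by
      intro h
      simp [← sub_eq_zero.1 h] at hv
    set w : ℂ := (z - v * conj (z : ℂ)) / (1 - v) with hw
    have hsub : w - conj (z : ℂ) = (z - conj (z : ℂ)) / (1 - v) := by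
      rw [hw]
      field_simp
      ring
    have hne : w - conj (z : ℂ) ≠ 0 := hsub ▸ div_ne_zero hz hv1
    have hval : cayleyTransform z w = v := by
      rw [cayleyTransform, hsub, hw]
      field_simp
      ring
    exact ⟨w, (norm_cayleyTransform_lt_one_iff z hne).1 (hval.symm ▸ hv), hval⟩

theorem lintegral_image_eq_lintegral_sq_norm_deriv_mul {s : Set ℂ} {f f' : ℂ → ℂ}
    (hs : MeasurableSet s) (hf' : ∀ w ∈ s, HasDerivWithinAt f (f' w) s w) (hf : Set.InjOn f s)
    (g : ℂ → ℝ≥0∞) :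
    ∫⁻ v in f '' s, g v = ∫⁻ w in s, ENNReal.ofReal (‖f' w‖ ^ 2) * g (f w) := by
  rw [lintegral_image_eq_lintegral_abs_det_fderiv_mul volume hs
    (fun w hw => (hf' w hw).hasFDerivWithinAt.restrictScalars ℝ) hf]
  refine lintegral_congr fun w => ?_
  congr 2
  simp [ContinuousLinearMap.det, LinearMap.det_restrictScalars, Algebra.norm_complex_eq,
    Complex.normSq_eq_norm_sq]

theorem lintegral_hypVolume (f : ℂ → ℝ≥0∞) :
    ∫⁻ x : ℍ, f x ∂hypVolume =
      ∫⁻ w in upperHalfPlaneSet, ENNReal.ofReal (1 / w.im ^ 2) * f w := by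
  have hcoe : MeasurableEmbedding UpperHalfPlane.coe := isOpenEmbedding_coe.measurableEmbedding
  have him : Measurable UpperHalfPlane.im := continuous_im.measurable
  rw [hypVolume, lintegral_withDensity_eq_lintegral_mul_non_measurable _ (by fun_prop)
      (.of_forall fun _ => ENNReal.ofReal_lt_top),
    ← range_coe, ← hcoe.map_comap, hcoe.lintegral_map]
  rfl

theorem lintegral_hypVolume_comp_cayleyTransform (z : ℍ) (g : ℂ → ℝ≥0∞) :
    ∫⁻ x : ℍ, g (cayleyTransform z x) ∂hypVolume =
      ∫⁻ v in ball (0 : ℂ) 1, ENNReal.ofReal (4 / (1 - ‖v‖ ^ 2) ^ 2) * g v := by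
  have hs : MeasurableSet upperHalfPlaneSet := isOpen_upperHalfPlaneSet.measurableSet
  rw [lintegral_hypVolume fun w => g (cayleyTransform z w), ← (bijOn_cayleyTransform z).image_eq,
    lintegral_image_eq_lintegral_sq_norm_deriv_mul hs
      (fun w hw => (hasDerivAt_cayleyTransform z (sub_conj_coe_ne_zero z hw)).hasDerivWithinAt)
      (bijOn_cayleyTransform z).injOn]
  refine setLIntegral_congr_fun hs fun w (hw : 0 < w.im) => ?_
  have hne := sub_conj_coe_ne_zero z hw
  have hnorm : ‖w - conj (z : ℂ)‖ ≠ 0 := norm_ne_zero_iff.2 hne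
  have hz := z.im_ne_zero
  rw [← mul_assoc, ← ENNReal.ofReal_mul (by positivity), one_sub_sq_norm_cayleyTransform z hne]
  congr 2
  simp only [norm_div, norm_mul, norm_pow, Complex.norm_ofNat, Complex.norm_I, Complex.norm_real,
    Real.norm_eq_abs, abs_of_pos z.im_pos]
  field_simp
  norm_num

theorem lintegral_comp_norm_complex {f : ℝ → ℝ≥0∞} (hf : Measurable f) :
    ∫⁻ w : ℂ, f ‖w‖ =
      ENNReal.ofReal (2 * π) * ∫⁻ ρ in Set.Ioi (0 : ℝ), ENNReal.ofReal ρ * f ρ := by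
  calc ∫⁻ w : ℂ, f ‖w‖
      = ∫⁻ p in Set.Ioi (0 : ℝ) ×ˢ Set.Ioo (-π) π, ENNReal.ofReal p.1 * f p.1 := by
        rw [← Complex.lintegral_comp_polarCoord_symm, polarCoord_target]
        refine setLIntegral_congr_fun (measurableSet_Ioi.prod measurableSet_Ioo) fun p hp => ?_
        rw [Complex.norm_polarCoord_symm, abs_of_pos hp.1, smul_eq_mul]
    _ = (∫⁻ ρ in Set.Ioi (0 : ℝ), ENNReal.ofReal ρ * f ρ) * volume (Set.Ioo (-π) π) := by
        rw [Measure.volume_eq_prod, ← Measure.prod_restrict, lintegral_prod _ (by fun_prop)]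
        simp only [lintegral_const, Measure.restrict_apply_univ]
        exact lintegral_mul_const _ (by fun_prop)
    _ = ENNReal.ofReal (2 * π) * ∫⁻ ρ in Set.Ioi (0 : ℝ), ENNReal.ofReal ρ * f ρ := by
        rw [Real.volume_Ioo, mul_comm, sub_neg_eq_add, two_mul]

theorem hasDerivAt_tanh (x : ℝ) : HasDerivAt tanh (1 / cosh x ^ 2) x := by
  have h := (hasDerivAt_sinh x).div (hasDerivAt_cosh x) (cosh_pos x).ne'
  rw [← sq, ← sq, cosh_sq_sub_sinh_sq] at h
  exact h.congr_of_eventuallyEq (.of_forall tanh_eq_sinh_div_cosh)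

theorem bijOn_tanh_Ioi : Set.BijOn tanh (Set.Ioi 0) (Set.Ioo 0 1) := by
  refine ⟨fun r (hr : 0 < r) => ⟨?_, tanh_lt_one r⟩, tanh_injective.injOn, fun ρ hρ =>
    ⟨artanh ρ, artanh_pos hρ, tanh_artanh ⟨by linarith [hρ.1], hρ.2⟩⟩⟩
  rw [tanh_eq_sinh_div_cosh]
  exact div_pos (sinh_pos_iff.2 hr) (cosh_pos r)

theorem bijOn_tanh_half : Set.BijOn (fun r => tanh (r / 2)) (Set.Ioi 0) (Set.Ioo 0 1) := by
  have hhalf : Set.BijOn (fun r : ℝ => r / 2) (Set.Ioi 0) (Set.Ioi 0) :=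
    ⟨fun _ hr => Set.mem_Ioi.2 (half_pos hr), (fun _ _ _ _ h => by simpa using h), fun r hr =>
      ⟨2 * r, Set.mem_Ioi.2 (mul_pos two_pos hr), mul_div_cancel_left₀ r two_ne_zero⟩⟩
  exact bijOn_tanh_Ioi.comp hhalf

theorem hasDerivAt_tanh_half (r : ℝ) :
    HasDerivAt (fun r => tanh (r / 2)) (1 / (2 * cosh (r / 2) ^ 2)) r := by
  refine ((hasDerivAt_tanh (r / 2)).comp (h := (· / 2)) r
    ((hasDerivAt_id' r).div_const 2)).congr_deriv ?_
  rw [div_mul_div_comm, one_mul, mul_comm]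

theorem one_sub_tanh_sq (x : ℝ) : 1 - tanh x ^ 2 = 1 / cosh x ^ 2 := by
  rw [tanh_eq_sinh_div_cosh, div_pow, one_sub_div (pow_ne_zero 2 (cosh_pos x).ne'),
    cosh_sq_sub_sinh_sq]

theorem sinh_eq_tanh_half_mul_disc_density (r : ℝ) :
    sinh r = 1 / (2 * cosh (r / 2) ^ 2) *
      (tanh (r / 2) * (4 / (1 - tanh (r / 2) ^ 2) ^ 2)) := by
  have hcosh : cosh (r / 2) ≠ 0 := (cosh_pos _).ne'
  have hdouble : sinh r = 2 * sinh (r / 2) * cosh (r / 2) := by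
    rw [← sinh_two_mul, mul_div_cancel₀ r two_ne_zero]
  rw [one_sub_tanh_sq, hdouble, tanh_eq_sinh_div_cosh]
  field_simp
  ring

theorem lintegral_disc_comp_norm {f : ℝ → ℝ≥0∞} (hf : Measurable f) :
    ∫⁻ v in ball (0 : ℂ) 1, ENNReal.ofReal (4 / (1 - ‖v‖ ^ 2) ^ 2) * f ‖v‖ =
      ENNReal.ofReal (2 * π) *
        ∫⁻ r in Set.Ioi (0 : ℝ), ENNReal.ofReal (sinh r) * f (tanh (r / 2)) := by
  set g : ℝ → ℝ≥0∞ := fun ρ => ENNReal.ofReal (4 / (1 - ρ ^ 2) ^ 2) * f ρ with hg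
  calc ∫⁻ v in ball (0 : ℂ) 1, g ‖v‖
      = ∫⁻ v : ℂ, (Set.Iio 1).indicator g ‖v‖ := by
        rw [← lintegral_indicator measurableSet_ball]
        refine lintegral_congr fun v => ?_
        simp only [Set.indicator, mem_ball_zero_iff, Set.mem_Iio]
    _ = ENNReal.ofReal (2 * π) * ∫⁻ ρ in Set.Ioo (0 : ℝ) 1, ENNReal.ofReal ρ * g ρ := by
        rw [lintegral_comp_norm_complex (Measurable.indicator (by fun_prop) measurableSet_Iio),
          ← Set.Iio_inter_Ioi, ← setLIntegral_indicator measurableSet_Iio]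
        simp only [Set.indicator_mul_right]
    _ = ENNReal.ofReal (2 * π) *
        ∫⁻ r in Set.Ioi (0 : ℝ), ENNReal.ofReal (sinh r) * f (tanh (r / 2)) := by
        rw [← bijOn_tanh_half.image_eq, lintegral_image_eq_lintegral_abs_deriv_mul
          measurableSet_Ioi (fun r _ => (hasDerivAt_tanh_half r).hasDerivWithinAt)
          bijOn_tanh_half.injOn]
        congr 1
        refine setLIntegral_congr_fun measurableSet_Ioi fun r hr => ?_
        have htanh : 0 < tanh (r / 2) := (bijOn_tanh_half.mapsTo hr).1
        simp only [hg]
        rw [sinh_eq_tanh_half_mul_disc_density r, abs_of_pos (by positivity),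
          ENNReal.ofReal_mul (by positivity), ENNReal.ofReal_mul htanh.le, mul_assoc, mul_assoc]

theorem lintegral_hypVolume_comp_dist (z : ℍ) {f : ℝ → ℝ≥0∞} (hf : Measurable f) :
    ∫⁻ x, f (dist x z) ∂hypVolume =
      ENNReal.ofReal (2 * π) * ∫⁻ r in Set.Ioi (0 : ℝ), ENNReal.ofReal (sinh r) * f r := by
  have hf' : Measurable fun ρ => f (2 * artanh ρ) := by
    unfold artanh
    fun_prop
  have h := lintegral_hypVolume_comp_cayleyTransform z fun v => f (2 * artanh ‖v‖)
  rw [lintegral_disc_comp_norm hf'] at h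
  simpa only [norm_cayleyTransform_coe, artanh_tanh, mul_div_cancel₀ _ (two_ne_zero' ℝ)] using h

theorem lintegral_closedBall_inv_sinh_dist (z : ℍ) (m : ℝ) :
    ∫⁻ x in closedBall z m, ENNReal.ofReal (sinh (dist x z))⁻¹ ∂hypVolume =
      ENNReal.ofReal (2 * π * m) := by
  calc ∫⁻ x in closedBall z m, ENNReal.ofReal (sinh (dist x z))⁻¹ ∂hypVolume
      = ∫⁻ x, (Set.Iic m).indicator (fun r => ENNReal.ofReal (sinh r)⁻¹) (dist x z) ∂hypVolume := by
        rw [← lintegral_indicator measurableSet_closedBall]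
        rfl
    _ = ENNReal.ofReal (2 * π) * ∫⁻ r in Set.Ioc 0 m,
          ENNReal.ofReal (sinh r) * ENNReal.ofReal (sinh r)⁻¹ := by
        rw [lintegral_hypVolume_comp_dist z
            (Measurable.indicator (by fun_prop) measurableSet_Iic),
          ← Set.Iic_inter_Ioi, ← setLIntegral_indicator measurableSet_Iic]
        simp only [Set.indicator_mul_right]
    _ = ENNReal.ofReal (2 * π) * ∫⁻ _ in Set.Ioc 0 m, 1 := by
        congr 1
        refine setLIntegral_congr_fun measurableSet_Ioc fun r hr => ?_
        have hr' : 0 < sinh r := sinh_pos_iff.2 hr.1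
        rw [← ENNReal.ofReal_mul hr'.le, mul_inv_cancel₀ hr'.ne', ENNReal.ofReal_one]
    _ = ENNReal.ofReal (2 * π * m) := by
        rw [setLIntegral_one, Real.volume_Ioc, sub_zero, ENNReal.ofReal_mul two_pi_pos.le]

theorem inv_sqrt_sinh_mul_sqrt_sinh_le {r s : ℝ} (hr : 0 ≤ r) (hrs : r ≤ s) :
    (√(sinh r) * √(sinh s))⁻¹ ≤ (sinh r)⁻¹ := by
  rcases hr.eq_or_lt with rfl | hr
  · simp
  have hsinh : 0 < sinh r := sinh_pos_iff.2 hr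
  gcongr
  calc sinh r = √(sinh r) * √(sinh r) := (Real.mul_self_sqrt hsinh.le).symm
    _ ≤ √(sinh r) * √(sinh s) := by gcongr; exact sinh_le_sinh.2 hrs

theorem lintegral_closedBall_inter_nearer_le (z z' : ℍ) (t t' : ℝ) :
    ∫⁻ x in closedBall z t ∩ closedBall z' t' ∩ {x | dist x z ≤ dist x z'},
        ENNReal.ofReal (√(sinh (dist x z)) * √(sinh (dist x z')))⁻¹ ∂hypVolume ≤
      ENNReal.ofReal (2 * π * min t t') := by
  have hsub : closedBall z t ∩ closedBall z' t' ∩ {x | dist x z ≤ dist x z'} ⊆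
      closedBall z (min t t') := fun x ⟨⟨hx, hx'⟩, hle⟩ =>
    mem_closedBall.2 (le_min hx (le_trans hle hx'))
  have hmeas : MeasurableSet (closedBall z t ∩ closedBall z' t' ∩ {x | dist x z ≤ dist x z'}) :=
    (measurableSet_closedBall.inter measurableSet_closedBall).inter
      (measurableSet_le (by fun_prop) (by fun_prop))
  calc _ ≤ ∫⁻ x in closedBall z t ∩ closedBall z' t' ∩ {x | dist x z ≤ dist x z'},
          ENNReal.ofReal (sinh (dist x z))⁻¹ ∂hypVolume :=
        setLIntegral_mono' hmeas fun x hx => ENNReal.ofReal_le_ofReal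
          (inv_sqrt_sinh_mul_sqrt_sinh_le dist_nonneg hx.2)
    _ ≤ ∫⁻ x in closedBall z (min t t'), ENNReal.ofReal (sinh (dist x z))⁻¹ ∂hypVolume :=
        lintegral_mono_set hsub
    _ = ENNReal.ofReal (2 * π * min t t') := lintegral_closedBall_inv_sinh_dist z _

theorem lintegral_closedBall_inter_closedBall_le (z z' : ℍ) (t t' : ℝ) :
    ∫⁻ x in closedBall z t ∩ closedBall z' t',
        ENNReal.ofReal (√(sinh (dist x z)) * √(sinh (dist x z')))⁻¹ ∂hypVolume ≤
      ENNReal.ofReal (4 * π * min t t') := by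
  have hcover : closedBall z t ∩ closedBall z' t' ⊆
      closedBall z t ∩ closedBall z' t' ∩ {x | dist x z ≤ dist x z'} ∪
        closedBall z' t' ∩ closedBall z t ∩ {x | dist x z' ≤ dist x z} := fun x ⟨hx, hx'⟩ =>
    (le_total (dist x z) (dist x z')).imp (⟨⟨hx, hx'⟩, ·⟩) (⟨⟨hx', hx⟩, ·⟩)
  have hswap := lintegral_closedBall_inter_nearer_le z' z t' t
  simp only [mul_comm (√(sinh (dist _ z'))), min_comm t'] at hswap
  calc _ ≤ _ := lintegral_mono_set hcover
    _ ≤ _ := lintegral_union_le _ _ _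
    _ ≤ ENNReal.ofReal (2 * π * min t t') + ENNReal.ofReal (2 * π * min t t') :=
        add_le_add (lintegral_closedBall_inter_nearer_le z z' t t') hswap
    _ = ENNReal.ofReal (4 * π * min t t') := by
        rw [← two_mul, ← ENNReal.ofReal_ofNat 2, ← ENNReal.ofReal_mul zero_le_two]
        ring_nf

/-- For `z, z' ∈ ℍ` and `t, t' > 0`,
`∫_ℍ 1_{[0,t]}(d(x,z)) 1_{[0,t']}(d(x,z')) / (√sinh(d(x,z)) √sinh(d(x,z'))) dx ≤
 1_{[0,t+t']}(d(z,z')) · 4π min(t,t')`. -/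
theorem sinh_singular_product_integral_bound (z z' : UpperHalfPlane) (t t' : ℝ)
    (ht : 0 < t) (ht' : 0 < t') :
    ∫ x, (if dist x z ≤ t then (1:ℝ) else 0) * (if dist x z' ≤ t' then (1:ℝ) else 0) /
          (Real.sqrt (Real.sinh (dist x z)) * Real.sqrt (Real.sinh (dist x z'))) ∂hypVolume
      ≤ (if dist z z' ≤ t + t' then (1:ℝ) else 0) * (4 * Real.pi * min t t') := by
  have hindicator (x : ℍ) :
      (if dist x z ≤ t then (1:ℝ) else 0) * (if dist x z' ≤ t' then (1:ℝ) else 0) /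
          (√(sinh (dist x z)) * √(sinh (dist x z'))) =
        (closedBall z t ∩ closedBall z' t').indicator
          (fun x => (√(sinh (dist x z)) * √(sinh (dist x z')))⁻¹) x := by
    by_cases hx : dist x z ≤ t <;> by_cases hx' : dist x z' ≤ t' <;> simp [hx, hx']
  simp only [hindicator]
  rw [integral_indicator (measurableSet_closedBall.inter measurableSet_closedBall)]
  split_ifs with hd
  · rw [one_mul]
    refine (le_norm_self _).trans ((norm_integral_le_lintegral_norm _).trans
      (ENNReal.toReal_le_of_le_ofReal (by positivity) ?_))
    refine (lintegral_mono fun x => ?_).trans (lintegral_closedBall_inter_closedBall_le z z' t t')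
    rw [Real.norm_of_nonneg (by positivity)]
  · simp [(closedBall_disjoint_closedBall (not_le.1 hd)).inter_eq]
end
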